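/- arXiv:2202.13141 — 2 statements merged into one kernel-verified Lean document; each statement's English description precedes it below -/
import Mathlib

section
/- Let H = (V,E) be a proper Eulerian hypergraph and let k ≥ 1. Then H has a k-qubit Pauli-based magic assignment if and only if the valid Gram space of H contains a magic Gram matrix whose rank as a matrix over the field ZMod 2 is at most 2k. -/
open Matrix Finset

/-! ### Pauli matrices and observables -/

/-- The Pauli `X` matrix. -/
noncomputable def PX : Matrix (Fin 2) (Fin 2) ℂ := !![0, 1; 1, 0]

/-- The Pauli `Y` matrix. -/
noncomputable def PY : Matrix (Fin 2) (Fin 2) ℂ := !![0, -Complex.I; Complex.I, 0]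

/-- The Pauli `Z` matrix. -/
noncomputable def PZ : Matrix (Fin 2) (Fin 2) ℂ := !![1, 0; 0, -1]

/-- The Kronecker (tensor) product of `k` 2×2 matrices, realized as a matrix indexed by
`Fin k → Fin 2` (a type of cardinality `2^k`). -/
noncomputable def pauliTensor (k : ℕ) (P : Fin k → Matrix (Fin 2) (Fin 2) ℂ) :
    Matrix (Fin k → Fin 2) (Fin k → Fin 2) ℂ :=
  Matrix.of fun f g => ∏ i, P i (f i) (g i)

/-- A `k`-qubit Pauli observable: `ε · (P₁ ⊗ ⋯ ⊗ P_k)` with `ε ∈ {1,-1}` and each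
`P_i ∈ {I, X, Y, Z}`. -/
def IsPauliObservable {k : ℕ} (A : Matrix (Fin k → Fin 2) (Fin k → Fin 2) ℂ) : Prop :=
  ∃ (ε : ℂ) (P : Fin k → Matrix (Fin 2) (Fin 2) ℂ),
    (ε = 1 ∨ ε = -1) ∧ (∀ i, P i = 1 ∨ P i = PX ∨ P i = PY ∨ P i = PZ) ∧
    A = ε • pauliTensor k P

/-! ### Hypergraphs -/

/-- Product of the observables assigned to the vertices of a hyperedge (taken in increasing
order of the vertices; for commuting observables this is the product in any order). -/
noncomputable def edgeProd {V n : Type*} [LinearOrder V] [Fintype n] [DecidableEq n]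
    (α : V → Matrix n n ℂ) (e : Finset V) : Matrix n n ℂ :=
  ((e.sort (· ≤ ·)).map α).prod

/-- A proper Eulerian hypergraph: each vertex lies in an even number of hyperedges, there are
no isolated vertices, no empty hyperedges, and all hyperedges are distinct. -/
def ProperEulerian {V E : Type*} [DecidableEq V] [Fintype E] (edge : E → Finset V) : Prop :=
  (∀ v : V, Even (Finset.univ.filter (fun e : E => v ∈ edge e)).card) ∧
  (∀ v : V, ∃ e : E, v ∈ edge e) ∧
  (∀ e : E, (edge e).Nonempty) ∧
  Function.Injective edge

/-- A valid Gram matrix for a hypergraph. -/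
def IsValidGram {V E : Type*} (edge : E → Finset V) (M : Matrix V V (ZMod 2)) : Prop :=
  M.IsSymm ∧ (∀ v, M v v = 0) ∧
  (∀ e : E, ∀ u ∈ edge e, ∀ v ∈ edge e, M u v = 0) ∧
  (∀ e : E, ∀ v : V, ∑ u ∈ edge e, M u v = 0)

/-- The concatenated list of vertices of the hyperedges, each hyperedge's vertices listed in
increasing order, hyperedges enumerated by the list `le`. -/
def vertexList {V E : Type*} [LinearOrder V] (edge : E → Finset V) (le : List E) : List V :=
  (le.map fun e => (edge e).sort (· ≤ ·)).flatten

/-- The inversion sum `s(M) = ∑_{i<j, L_i > L_j} M_{L_i, L_j}`. -/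
def inversionSum {V : Type*} [LinearOrder V] (M : Matrix V V (ZMod 2)) (L : List V) : ZMod 2 :=
  ∑ i : Fin L.length, ∑ j : Fin L.length,
    if i < j ∧ L.get j < L.get i then M (L.get i) (L.get j) else 0

/-- A magic Gram matrix: a valid Gram matrix with inversion sum 1. -/
def MagicGram {V E : Type*} [LinearOrder V] (edge : E → Finset V) (le : List E)
    (M : Matrix V V (ZMod 2)) : Prop :=
  IsValidGram edge M ∧ inversionSum M (vertexList edge le) = 1

/-- A `k`-qubit Pauli-based magic assignment of a hypergraph. -/
def IsPauliMagicAssignment {V E : Type*} [LinearOrder V] [Fintype E] (k : ℕ)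
    (edge : E → Finset V) (α : V → Matrix (Fin k → Fin 2) (Fin k → Fin 2) ℂ) : Prop :=
  (∀ v, IsPauliObservable (α v)) ∧
  (∀ e : E, ∀ u ∈ edge e, ∀ w ∈ edge e, Commute (α u) (α w)) ∧
  (∀ e : E, edgeProd α (edge e) = 1 ∨ edgeProd α (edge e) = -1) ∧
  Odd (Nat.card {e : E // edgeProd α (edge e) = -1})

/-- A magic assignment of a hypergraph by Hermitian matrices squaring to the identity. -/
def IsMagicAssignment {V E n : Type*} [LinearOrder V] [Fintype E] [Fintype n] [DecidableEq n]
    (edge : E → Finset V) (α : V → Matrix n n ℂ) : Prop :=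
  (∀ v, (α v).IsHermitian) ∧ (∀ v, α v * α v = 1) ∧
  (∀ e : E, ∀ u ∈ edge e, ∀ w ∈ edge e, Commute (α u) (α w)) ∧
  (∀ e : E, edgeProd α (edge e) = 1 ∨ edgeProd α (edge e) = -1) ∧
  Odd (Nat.card {e : E // edgeProd α (edge e) = -1})

open scoped Classical in
/-- The sign vector `c(α) ∈ (ZMod 2)^E` of an assignment: `0` on hyperedges with product `+I`,
`1` on the others. -/
noncomputable def cvec {V E n : Type*} [LinearOrder V] [Fintype E] [Fintype n] [DecidableEq n]
    (edge : E → Finset V) (α : V → Matrix n n ℂ) : E → ZMod 2 :=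
  fun e => if edgeProd α (edge e) = 1 then 0 else 1

/-- The incidence matrix of a hypergraph. -/
def incMatrix {V E : Type*} [DecidableEq V] (edge : E → Finset V) : Matrix V E (ZMod 2) :=
  Matrix.of fun v e => if v ∈ edge e then 1 else 0

/-- Hamming weight of a vector over `ZMod 2`. -/
def hWeight {E : Type*} [Fintype E] (y : E → ZMod 2) : ℕ :=
  (Finset.univ.filter fun e => y e ≠ 0).card

/-- The symplectic product on `(ZMod 2)^{2k}` (coordinates indexed by `Fin k ⊕ Fin k`). -/
def sympl (k : ℕ) (s t : Fin k ⊕ Fin k → ZMod 2) : ZMod 2 :=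
  ∑ i : Fin k, (s (Sum.inl i) * t (Sum.inr i) + s (Sum.inr i) * t (Sum.inl i))

/-! Up to sign, `k`-qubit Pauli observables are the vectors of `(ZMod 2)^{2k}`, and two of them
commute up to `-1` to the power of their symplectic product. The commutation pattern of a Pauli
assignment is therefore a symplectic Gram matrix, of rank at most `2k`; conversely every
alternating matrix of rank at most `2k` arises in this way, by splitting off hyperbolic planes,
and the vectors can be chosen to satisfy all linear relations between the rows of the matrix. For
such vectors, the validity conditions make the observables in a hyperedge commute and have a scalar
product.

The product of all the hyperedge products is the product of the observables along the vertex list.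
Sorting that list costs the sign `(-1) ^ s(M)`, and the sorted product is `1`, because every
observable squares to `1` and every vertex occurs an even number of times. Hence the number of
hyperedges with product `-1` has the parity of `s(M)`. -/

section SignPower

lemma uzpow_sum {ι A : Type*} [CommSemiring A] [Module A (Additive ℤˣ)] (u : ℤˣ) (s : Finset ι)
    (f : ι → A) : u ^ (∑ i ∈ s, f i) = ∏ i ∈ s, u ^ f i :=
  Additive.ofMul.injective <| by simp only [ofMul_uzpow, ofMul_prod, Finset.sum_smul]

lemma zmod_two_eq_zero_or_one (a : ZMod 2) : a = 0 ∨ a = 1 := by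
  revert a
  decide

lemma neg_one_uzpow_smul_injective {R : Type*} [Ring R] (hR : (-1 : R) ≠ 1) {x : R}
    (hx : IsUnit x) : Function.Injective fun a : ZMod 2 => (-1 : ℤˣ) ^ a • x := by
  have hneg : -x ≠ x := by
    rw [← neg_one_mul]
    exact fun h => hR (hx.mul_eq_right.1 h)
  refine fun a b hab => ?_
  rcases zmod_two_eq_zero_or_one a with rfl | rfl <;>
    rcases zmod_two_eq_zero_or_one b with rfl | rfl <;> simp_all [eq_comm]

lemma neg_one_pow_eq_neg_one_uzpow_smul {R : Type*} [Ring R] (n : ℕ) :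
    (-1 : R) ^ n = (-1 : ℤˣ) ^ (n : ZMod 2) • 1 := by
  rw [uzpow_natCast, Units.smul_def]
  simp

lemma matrix_neg_one_ne_one {n R : Type*} [DecidableEq n] [Nonempty n] [Ring R]
    (hR : (-1 : R) ≠ 1) : (-1 : Matrix n n R) ≠ 1 := fun h => by
  obtain ⟨i⟩ := ‹Nonempty n›
  exact hR <| by simpa using congrFun₂ h i i

end SignPower

lemma inversionSum_cons {V : Type*} [LinearOrder V] (M : Matrix V V (ZMod 2)) (a : V)
    (L : List V) :
    inversionSum M (a :: L) =
      (L.map fun b => if b < a then M a b else 0).sum + inversionSum M L := by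
  simp only [inversionSum, List.length_cons, Fin.sum_univ_succ, ← Fin.sum_univ_fun_getElem]
  simp

/-- The commutation pattern of a family `α` of ring elements that pairwise commute or
anticommute: `M u v = 1` encodes `α u * α v = -(α v * α u)`. This is the Gram matrix of `α`. -/
def IsCommutationMatrix {V R : Type*} [Ring R] (α : V → R) (M : Matrix V V (ZMod 2)) : Prop :=
  ∀ u v, α u * α v = (-1 : ℤˣ) ^ M u v • (α v * α u)

namespace IsCommutationMatrix

variable {V R : Type*} [Ring R] {α : V → R} {M : Matrix V V (ZMod 2)}

lemma units_smul (hM : IsCommutationMatrix α M) (ε : V → ℤˣ) :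
    IsCommutationMatrix (fun v => ε v • α v) M := fun u v => by
  rw [smul_mul_smul_comm, smul_mul_smul_comm, hM u v, smul_smul, smul_smul, mul_comm (ε v),
    mul_comm (ε u * ε v)]

lemma prod_map_mul (hM : IsCommutationMatrix α M) (l : List V) (v : V) :
    (l.map α).prod * α v = (-1 : ℤˣ) ^ (l.map (M · v)).sum • (α v * (l.map α).prod) := by
  induction l with
  | nil => simp
  | cons u l ih =>
    simp only [List.map_cons, List.prod_cons, List.sum_cons]
    rw [mul_assoc, ih, mul_smul_comm, ← mul_assoc, hM u v, smul_mul_assoc, smul_smul, mul_assoc,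
      uzpow_add, mul_comm]

lemma sum_map_eq_zero_of_commute (hM : IsCommutationMatrix α M) (hR : (-1 : R) ≠ 1)
    (hα : ∀ v, IsUnit (α v)) {l : List V} {v : V} (h : Commute (l.map α).prod (α v)) :
    (l.map (M · v)).sum = 0 := by
  have hunit : IsUnit (l.map α).prod := List.prod_isUnit <| by simpa using fun u _ => hα u
  refine neg_one_uzpow_smul_injective hR ((hα v).mul hunit) ?_
  simp only [← hM.prod_map_mul, h.eq, uzpow_zero, one_smul]

lemma apply_eq_zero_of_commute (hM : IsCommutationMatrix α M) (hR : (-1 : R) ≠ 1)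
    (hα : ∀ v, IsUnit (α v)) {u v : V} (h : Commute (α u) (α v)) : M u v = 0 := by
  simpa using hM.sum_map_eq_zero_of_commute hR hα (l := [u]) (by simpa using h)

lemma isSymm (hM : IsCommutationMatrix α M) (hR : (-1 : R) ≠ 1) (hα : ∀ v, IsUnit (α v)) :
    M.IsSymm := by
  refine IsSymm.ext fun u v => CharTwo.add_eq_zero.1 <|
    neg_one_uzpow_smul_injective hR ((hα v).mul (hα u)) ?_
  simp only [uzpow_add, mul_smul, ← hM u v, ← hM v u, uzpow_zero, one_smul]

section Sorting

variable [LinearOrder V]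

lemma mul_prod_map_of_sorted (hM : IsCommutationMatrix α M) (a : V) {l : List V}
    (hl : l.Pairwise (· ≤ ·)) :
    α a * (l.map α).prod = (-1 : ℤˣ) ^ (l.map fun b => if b < a then M a b else 0).sum •
      ((l.orderedInsert (· ≤ ·) a).map α).prod := by
  induction l with
  | nil => simp
  | cons b l ih =>
    obtain ⟨hbl, hl'⟩ := List.pairwise_cons.1 hl
    rcases le_or_gt a b with hab | hba
    · have hsum : ((b :: l).map fun c => if c < a then M a c else 0).sum = 0 := by
        refine List.sum_eq_zero fun x hx => ?_
        obtain ⟨c, hc, rfl⟩ := List.mem_map.1 hx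
        have hac : a ≤ c := (List.mem_cons.1 hc).elim (· ▸ hab) fun h => hab.trans (hbl c h)
        exact if_neg hac.not_gt
      rw [hsum, uzpow_zero, one_smul, List.orderedInsert_cons, if_pos hab]
      rfl
    · simp only [List.map_cons, List.prod_cons, List.sum_cons, List.orderedInsert_cons,
        hba.not_ge, if_false, hba, if_true]
      rw [← mul_assoc, hM a b, uzpow_add, smul_mul_assoc, mul_assoc, ih hl', mul_smul_comm,
        smul_smul]

lemma prod_map_eq_smul_prod_insertionSort (hM : IsCommutationMatrix α M) (L : List V) :
    (L.map α).prod =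
      (-1 : ℤˣ) ^ inversionSum M L • ((L.insertionSort (· ≤ ·)).map α).prod := by
  induction L with
  | nil => simp [inversionSum]
  | cons a L ih =>
    have hperm := (List.perm_insertionSort (· ≤ ·) L).map fun b => if b < a then M a b else 0
    rw [inversionSum_cons, List.map_cons, List.prod_cons, ih, mul_smul_comm,
      hM.mul_prod_map_of_sorted a (List.pairwise_insertionSort _ L), smul_smul,
      List.insertionSort_cons, hperm.sum_eq, uzpow_add, mul_comm]

end Sorting

end IsCommutationMatrix

section Involutions

variable {V R : Type*} [Monoid R] {α : V → R}

lemma prod_map_mul_self_of_commute (hα : ∀ v, α v * α v = 1) {l : List V}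
    (hcomm : ∀ u ∈ l, ∀ v ∈ l, Commute (α u) (α v)) : (l.map α).prod * (l.map α).prod = 1 := by
  induction l with
  | nil => simp
  | cons a l ih =>
    have hal : Commute (α a) (l.map α).prod := Commute.list_prod_right _ _ <| by
      simpa using fun v hv => hcomm a List.mem_cons_self v (List.mem_cons_of_mem a hv)
    rw [List.map_cons, List.prod_cons, hal.symm.mul_mul_mul_comm, hα, one_mul]
    exact ih fun u hu v hv => hcomm u (List.mem_cons_of_mem a hu) v (List.mem_cons_of_mem a hv)

lemma prod_map_eq_one_of_sorted_of_even_count [LinearOrder V] (hα : ∀ v, α v * α v = 1)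
    {l : List V} (hl : l.Pairwise (· ≤ ·)) (heven : ∀ v, Even (l.count v)) :
    (l.map α).prod = 1 := by
  induction l using List.twoStepInduction with
  | nil => simp
  | singleton a => simpa using heven a
  | cons_cons a b l ih _ =>
    simp only [List.pairwise_cons, List.mem_cons, forall_eq_or_imp] at hl
    obtain ⟨⟨hab, -⟩, hbl, hl'⟩ := hl
    have hmem : a ∈ b :: l := by
      by_contra ha
      simpa [List.count_eq_zero_of_not_mem ha] using heven a
    obtain rfl : a = b :=
      (List.mem_cons.1 hmem).elim id fun h => le_antisymm hab (hbl a h)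
    have heven' (v : V) : Even (l.count v) := by
      have := heven v
      by_cases hv : a = v <;> simpa [List.count_cons, hv, Nat.even_add_one] using this
    rw [List.map_cons, List.map_cons, List.prod_cons, List.prod_cons, ← mul_assoc, hα, one_mul,
      ih hl' heven']

lemma prod_map_eq_neg_one_pow_countP {ι : Type*} [HasDistribNeg R] [DecidableEq R] {f : ι → R}
    (hf : ∀ i, f i = 1 ∨ f i = -1) (l : List ι) :
    (l.map f).prod = (-1) ^ l.countP (f · = -1) := by
  induction l with
  | nil => simp
  | cons i l ih =>
    rw [List.map_cons, List.prod_cons, ih, List.countP_cons]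
    by_cases h : f i = -1
    · simp [h, pow_succ']
    · have hi := (hf i).resolve_right h
      rw [hi] at h ⊢
      simp [h]

end Involutions

section Hypergraph

variable {V E n : Type*} [LinearOrder V] {edge : E → Finset V} {le : List E}

lemma sum_map_sort {A : Type*} [AddCommMonoid A] (e : Finset V) (f : V → A) :
    ((e.sort (· ≤ ·)).map f).sum = ∑ u ∈ e, f u := by
  rw [← List.sum_toFinset f (Finset.sort_nodup _ _), Finset.sort_toFinset]

lemma countP_eq_card_filter [Fintype E] (hnd : le.Nodup) (hmem : ∀ e, e ∈ le) (p : E → Prop)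
    [DecidablePred p] : le.countP p = (univ.filter p).card := by
  classical
  rw [← hnd.card_eq_countP, eq_univ_iff_forall.2 fun e => List.mem_toFinset.2 (hmem e)]

lemma count_vertexList (edge : E → Finset V) (le : List E) (v : V) :
    (vertexList edge le).count v = le.countP (v ∈ edge ·) := by
  induction le with
  | nil => rfl
  | cons e le ih =>
    simp only [vertexList, List.map_cons, List.flatten_cons, List.count_append] at ih ⊢
    rw [ih, (Finset.sort_nodup _ _).count, List.countP_cons, add_comm]
    simp

variable [Fintype n] [DecidableEq n] {α : V → Matrix n n ℂ} {M : Matrix V V (ZMod 2)}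

lemma prod_map_vertexList (α : V → Matrix n n ℂ) (edge : E → Finset V) (le : List E) :
    ((vertexList edge le).map α).prod = (le.map fun e => edgeProd α (edge e)).prod := by
  rw [vertexList, List.map_flatten, List.prod_flatten, List.map_map, List.map_map]
  rfl

namespace IsCommutationMatrix

theorem isValidGram [Nonempty n] (hM : IsCommutationMatrix α M) (hα : ∀ v, IsUnit (α v))
    (hcomm : ∀ e, ∀ u ∈ edge e, ∀ w ∈ edge e, Commute (α u) (α w))
    (hsign : ∀ e, edgeProd α (edge e) = 1 ∨ edgeProd α (edge e) = -1) :
    IsValidGram edge M := by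
  have hR : (-1 : Matrix n n ℂ) ≠ 1 := matrix_neg_one_ne_one <| neg_ne_self.2 one_ne_zero
  refine ⟨hM.isSymm hR hα, fun v => hM.apply_eq_zero_of_commute hR hα (Commute.refl _),
    fun e u hu w hw => hM.apply_eq_zero_of_commute hR hα (hcomm e u hu w hw), fun e v => ?_⟩
  have hprod : Commute (edgeProd α (edge e)) (α v) := by
    rcases hsign e with h | h <;> rw [h]
    exacts [Commute.one_left _, (Commute.one_left _).neg_left]
  rw [← sum_map_sort]
  exact hM.sum_map_eq_zero_of_commute hR hα hprod

theorem prod_map_vertexList_eq (hM : IsCommutationMatrix α M) (hα : ∀ v, α v * α v = 1)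
    [Fintype E] (heven : ∀ v, Even (univ.filter fun e => v ∈ edge e).card)
    (hnd : le.Nodup) (hmem : ∀ e, e ∈ le) :
    ((vertexList edge le).map α).prod = (-1 : ℤˣ) ^ inversionSum M (vertexList edge le) • 1 := by
  rw [hM.prod_map_eq_smul_prod_insertionSort, prod_map_eq_one_of_sorted_of_even_count hα
    (List.pairwise_insertionSort _ _) fun v => ?_]
  rw [(List.perm_insertionSort _ _).count_eq, count_vertexList, countP_eq_card_filter hnd hmem]
  exact heven v

theorem natCast_card_edgeProd_eq_neg_one [Nonempty n] [Fintype E]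
    (hM : IsCommutationMatrix α M) (hα : ∀ v, α v * α v = 1)
    (heven : ∀ v, Even (univ.filter fun e => v ∈ edge e).card)
    (hnd : le.Nodup) (hmem : ∀ e, e ∈ le)
    (hsign : ∀ e, edgeProd α (edge e) = 1 ∨ edgeProd α (edge e) = -1) :
    (Nat.card {e // edgeProd α (edge e) = -1} : ZMod 2) =
      inversionSum M (vertexList edge le) := by
  classical
  have hcard : Nat.card {e // edgeProd α (edge e) = -1} =
      le.countP fun e => edgeProd α (edge e) = -1 := by
    rw [countP_eq_card_filter hnd hmem, Nat.card_eq_fintype_card, Fintype.card_subtype]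
  have hR : (-1 : Matrix n n ℂ) ≠ 1 := matrix_neg_one_ne_one <| neg_ne_self.2 one_ne_zero
  refine neg_one_uzpow_smul_injective hR isUnit_one ?_
  simp only [← neg_one_pow_eq_neg_one_uzpow_smul]
  rw [hcard, ← prod_map_eq_neg_one_pow_countP hsign, ← prod_map_vertexList,
    hM.prod_map_vertexList_eq hα heven hnd hmem]

end IsCommutationMatrix

end Hypergraph

section Wedderburn

variable {m n K : Type*} [Field K]

/-- Wedderburn's rank-one reduction of `M` at the pivot `M i j`: subtract the multiple of the
product of column `j` and row `i` that clears both. -/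
def wedderburnReduction (M : Matrix m n K) (i : m) (j : n) : Matrix m n K :=
  Matrix.of fun x y => M x y - M x j * M i y / M i j

lemma wedderburnReduction_eq_mul [Fintype n] [DecidableEq n] (M : Matrix m n K) (i : m) (j : n) :
    wedderburnReduction M i j = M * (1 - vecMulVec (Pi.single j (M i j)⁻¹) (M i)) := by
  ext x y
  rw [Matrix.mul_sub, Matrix.mul_one, mul_vecMulVec, mulVec_single]
  simp [wedderburnReduction, vecMulVec_apply, div_eq_mul_inv]

theorem rank_wedderburnReduction_lt [Finite m] [Fintype n] (M : Matrix m n K) {i : m} {j : n}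
    (hij : M i j ≠ 0) : (wedderburnReduction M i j).rank < M.rank := by
  classical
  have hker : LinearMap.range (wedderburnReduction M i j).mulVecLin ≤
      LinearMap.ker (LinearMap.proj i : (m → K) →ₗ[K] K) := by
    rintro _ ⟨w, rfl⟩
    have hrow : wedderburnReduction M i j i = 0 := by
      ext y
      simp [wedderburnReduction, mul_div_cancel_left₀ _ hij]
    simp [mulVec, hrow]
  have hle : LinearMap.range (wedderburnReduction M i j).mulVecLin ≤
      LinearMap.range M.mulVecLin := by
    rw [wedderburnReduction_eq_mul, mulVecLin_mul]
    exact LinearMap.range_comp_le_range _ _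
  have hmem : M.col j ∈ LinearMap.range M.mulVecLin := ⟨Pi.single j 1, by ext; simp⟩
  exact Submodule.finrank_lt_finrank_of_lt <| SetLike.lt_iff_le_and_exists.2
    ⟨hle, M.col j, hmem, fun h => hij (hker h)⟩

lemma vecMul_wedderburnReduction_eq_zero [Fintype m] {M : Matrix m n K} {w : m → K}
    (hw : w ᵥ* M = 0) (i : m) (j : n) : w ᵥ* wedderburnReduction M i j = 0 := by
  have hcol (y : n) : ∑ x, w x * M x y = 0 := congrFun hw y
  ext y
  simp only [wedderburnReduction, vecMul, dotProduct, of_apply, mul_sub, sum_sub_distrib, hcol,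
    mul_div_assoc, ← mul_assoc, ← sum_mul]
  simp

end Wedderburn

section SymplecticFactorization

variable {V K : Type*} [Field K]

lemma mul_J_mul_transpose_apply {ι : Type*} [Fintype ι] [DecidableEq ι]
    (S : Matrix V (ι ⊕ ι) K) (x y : V) :
    (S * J ι K * Sᵀ) x y = ∑ i, (S x (.inr i) * S y (.inl i) - S x (.inl i) * S y (.inr i)) := by
  simp [J, mul_apply, fromBlocks, Fintype.sum_sum_type, one_apply, sub_eq_add_neg,
    sum_add_distrib]

lemma rank_mul_J_mul_transpose_le {ι : Type*} [Fintype ι] [DecidableEq ι] [Fintype V]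
    (S : Matrix V (ι ⊕ ι) K) : (S * J ι K * Sᵀ).rank ≤ 2 * Fintype.card ι := by
  rw [two_mul, ← Fintype.card_sum, Matrix.mul_assoc]
  exact (rank_mul_le_left _ _).trans (rank_le_card_width S)

/-- The reduction of an alternating matrix at both pivots `M u v` and `M v u`, which splits off
the hyperbolic plane spanned by `u` and `v`. -/
def hyperbolicReduction (M : Matrix V V K) (u v : V) : Matrix V V K :=
  wedderburnReduction (wedderburnReduction M u v) v u

variable {M : Matrix V V K} {u v : V}

lemma hyperbolicReduction_apply (hu : M u u = 0) (hv : M v v = 0) (x y : V) :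
    hyperbolicReduction M u v x y =
      M x y - M x v * M u y / M u v - M x u * M v y / M v u := by
  simp [hyperbolicReduction, wedderburnReduction, hu, hv]

lemma rank_hyperbolicReduction_add_two_le [Fintype V] (hv : M v v = 0) (huv : M u v ≠ 0)
    (hvu : M v u ≠ 0) : (hyperbolicReduction M u v).rank + 2 ≤ M.rank := by
  have hvu' : wedderburnReduction M u v v u ≠ 0 := by simpa [wedderburnReduction, hv] using hvu
  have hsecond := rank_wedderburnReduction_lt _ hvu'
  have hfirst := rank_wedderburnReduction_lt M huv
  rw [hyperbolicReduction]
  lia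

lemma transpose_hyperbolicReduction (hM : Mᵀ = -M) (hu : M u u = 0) (hv : M v v = 0) :
    (hyperbolicReduction M u v)ᵀ = -hyperbolicReduction M u v := by
  have hskew (x y : V) : M y x = -M x y := congrFun₂ hM x y
  ext x y
  rw [transpose_apply, Matrix.neg_apply, hyperbolicReduction_apply hu hv,
    hyperbolicReduction_apply hu hv, hskew x y, hskew x v, hskew x u, hskew u v, hskew u y,
    hskew v y]
  ring

lemma hyperbolicReduction_apply_self (hM : Mᵀ = -M) (hdiag : ∀ x, M x x = 0) (x : V) :
    hyperbolicReduction M u v x x = 0 := by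
  have hskew (x y : V) : M y x = -M x y := congrFun₂ hM x y
  rw [hyperbolicReduction_apply (hdiag u) (hdiag v), hdiag, hskew x u, hskew x v, hskew u v]
  ring

lemma vecMul_hyperbolicReduction_eq_zero [Fintype V] {w : V → K} (hw : w ᵥ* M = 0) :
    w ᵥ* hyperbolicReduction M u v = 0 :=
  vecMul_wedderburnReduction_eq_zero (vecMul_wedderburnReduction_eq_zero hw u v) v u

/-- Extends symplectic coordinates `S` for the hyperbolic reduction of `M` by the coordinates
along the hyperbolic plane that was split off. -/
def hyperbolicExtension {k : ℕ} (M : Matrix V V K) (u v : V)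
    (S : Matrix V (Fin k ⊕ Fin k) K) : Matrix V (Fin (k + 1) ⊕ Fin (k + 1)) K :=
  Matrix.of fun x => Sum.elim (Fin.cons (M x v / M u v) fun i => S x (.inl i))
    (Fin.cons (M x u) fun i => S x (.inr i))

lemma hyperbolicExtension_mul_J_mul_transpose {k : ℕ} {S : Matrix V (Fin k ⊕ Fin k) K}
    (hM : Mᵀ = -M) (hu : M u u = 0) (hv : M v v = 0)
    (hS : hyperbolicReduction M u v = S * J (Fin k) K * Sᵀ) :
    M = hyperbolicExtension M u v S * J (Fin (k + 1)) K * (hyperbolicExtension M u v S)ᵀ := by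
  have hskew (x y : V) : M y x = -M x y := congrFun₂ hM x y
  ext x y
  have hxy := congrFun₂ hS x y
  rw [hyperbolicReduction_apply hu hv, mul_J_mul_transpose_apply] at hxy
  rw [mul_J_mul_transpose_apply, Fin.sum_univ_succ]
  simp only [hyperbolicExtension, of_apply, Sum.elim_inl, Sum.elim_inr, Fin.cons_zero,
    Fin.cons_succ, ← hxy, hskew y u, hskew y v, hskew u v]
  ring

lemma vecMul_hyperbolicExtension_eq_zero [Fintype V] {k : ℕ} {S : Matrix V (Fin k ⊕ Fin k) K}
    {w : V → K} (hM : w ᵥ* M = 0) (hS : w ᵥ* S = 0) :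
    w ᵥ* hyperbolicExtension M u v S = 0 := by
  have hMw (y : V) : ∑ x, w x * M x y = 0 := congrFun hM y
  have hSw (c : Fin k ⊕ Fin k) : ∑ x, w x * S x c = 0 := congrFun hS c
  ext (c | c) <;> cases c using Fin.cases <;>
    simp [hyperbolicExtension, vecMul, dotProduct, hMw, hSw, ← mul_div_assoc, ← sum_div]

theorem exists_eq_mul_J_mul_transpose [Fintype V] (k : ℕ) (M : Matrix V V K) (hM : Mᵀ = -M)
    (hdiag : ∀ x, M x x = 0) (hrank : M.rank ≤ 2 * k) :
    ∃ S : Matrix V (Fin k ⊕ Fin k) K, M = S * J (Fin k) K * Sᵀ ∧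
      ∀ w, w ᵥ* M = 0 → w ᵥ* S = 0 := by
  by_cases hzero : M = 0
  · exact ⟨0, by simp [hzero], fun w _ => vecMul_zero w⟩
  obtain ⟨u, v, huv⟩ : ∃ u v, M u v ≠ 0 := by
    contrapose! hzero
    exact ext hzero
  have hvu : M v u ≠ 0 := by
    rw [← transpose_apply M, hM]
    exact neg_ne_zero.2 huv
  have hred := rank_hyperbolicReduction_add_two_le (hdiag v) huv hvu
  obtain ⟨k, rfl⟩ := Nat.exists_eq_add_one.2 (show 0 < k by lia)
  obtain ⟨S, hS, hker⟩ := exists_eq_mul_J_mul_transpose k (hyperbolicReduction M u v)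
    (transpose_hyperbolicReduction hM (hdiag u) (hdiag v))
    (hyperbolicReduction_apply_self hM hdiag) (by lia)
  exact ⟨hyperbolicExtension M u v S,
    hyperbolicExtension_mul_J_mul_transpose hM (hdiag u) (hdiag v) hS, fun w hw =>
      vecMul_hyperbolicExtension_eq_zero hw (hker w (vecMul_hyperbolicReduction_eq_zero hw))⟩

end SymplecticFactorization

section Pauli

/-- The Pauli matrix with coordinates `(a, b)`: it equals `X ^ a * Z ^ b` up to a phase. -/
noncomputable def pauliMatrix (a b : ZMod 2) : Matrix (Fin 2) (Fin 2) ℂ :=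
  if a = 0 then (if b = 0 then 1 else PZ) else (if b = 0 then PX else PY)

lemma pauliMatrix_mul_self (a b : ZMod 2) : pauliMatrix a b * pauliMatrix a b = 1 := by
  rcases zmod_two_eq_zero_or_one a with rfl | rfl <;>
    rcases zmod_two_eq_zero_or_one b with rfl | rfl <;>
    simp [pauliMatrix, PX, PY, PZ, one_fin_two]

lemma pauliMatrix_eq_one_or_eq (a b : ZMod 2) :
    pauliMatrix a b = 1 ∨ pauliMatrix a b = PX ∨ pauliMatrix a b = PY ∨ pauliMatrix a b = PZ := by
  unfold pauliMatrix
  split_ifs <;> simp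

lemma exists_eq_pauliMatrix {P : Matrix (Fin 2) (Fin 2) ℂ}
    (hP : P = 1 ∨ P = PX ∨ P = PY ∨ P = PZ) : ∃ a b, P = pauliMatrix a b := by
  rcases hP with rfl | rfl | rfl | rfl
  exacts [⟨0, 0, by simp [pauliMatrix]⟩, ⟨1, 0, by simp [pauliMatrix]⟩,
    ⟨1, 1, by simp [pauliMatrix]⟩, ⟨0, 1, by simp [pauliMatrix]⟩]

lemma pauliMatrix_mul_comm (a b c d : ZMod 2) :
    pauliMatrix a b * pauliMatrix c d =
      (-1 : ℤˣ) ^ (a * d + b * c) • (pauliMatrix c d * pauliMatrix a b) := by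
  rcases zmod_two_eq_zero_or_one a with rfl | rfl <;>
    rcases zmod_two_eq_zero_or_one b with rfl | rfl <;>
    rcases zmod_two_eq_zero_or_one c with rfl | rfl <;>
    rcases zmod_two_eq_zero_or_one d with rfl | rfl <;>
    simp [pauliMatrix, PX, PY, PZ, CharTwo.add_self_eq_zero]

lemma exists_pauliMatrix_mul_eq_smul (a b c d : ZMod 2) :
    ∃ z : ℂ, pauliMatrix a b * pauliMatrix c d = z • pauliMatrix (a + c) (b + d) := by
  -- With finitely many candidate phases, the existential unfolds to a disjunction for `simp`.
  have hphase : ∃ z ∈ ({1, Complex.I, -Complex.I} : Set ℂ),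
      pauliMatrix a b * pauliMatrix c d = z • pauliMatrix (a + c) (b + d) := by
    rcases zmod_two_eq_zero_or_one a with rfl | rfl <;>
      rcases zmod_two_eq_zero_or_one b with rfl | rfl <;>
      rcases zmod_two_eq_zero_or_one c with rfl | rfl <;>
      rcases zmod_two_eq_zero_or_one d with rfl | rfl <;>
      simp [pauliMatrix, PX, PY, PZ, CharTwo.add_self_eq_zero, one_fin_two]
  obtain ⟨z, -, hz⟩ := hphase
  exact ⟨z, hz⟩

variable {k : ℕ}

lemma pauliTensor_mul (P Q : Fin k → Matrix (Fin 2) (Fin 2) ℂ) :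
    pauliTensor k P * pauliTensor k Q = pauliTensor k fun i => P i * Q i := by
  ext f g
  simp only [pauliTensor, mul_apply, of_apply, ← prod_mul_distrib, prod_univ_sum,
    Fintype.piFinset_univ]

lemma pauliTensor_one : pauliTensor k (fun _ => 1) = 1 := by
  ext f g
  simp [pauliTensor, one_apply, prod_ite_zero, funext_iff]

lemma pauliTensor_smul {S : Type*} [CommMonoid S] [MulAction S ℂ] [IsScalarTower S ℂ ℂ]
    [SMulCommClass S ℂ ℂ] (c : Fin k → S) (P : Fin k → Matrix (Fin 2) (Fin 2) ℂ) :
    pauliTensor k (fun i => c i • P i) = (∏ i, c i) • pauliTensor k P := by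
  ext f g
  simp [pauliTensor, prod_smul]

/-- The Pauli observable of sign `+1` with symplectic coordinates `s`: the left and right halves of
`s` are the first and second coordinates of the tensor factors. -/
noncomputable def pauliString (s : Fin k ⊕ Fin k → ZMod 2) :
    Matrix (Fin k → Fin 2) (Fin k → Fin 2) ℂ :=
  pauliTensor k fun i => pauliMatrix (s (.inl i)) (s (.inr i))

lemma pauliString_mul_self (s : Fin k ⊕ Fin k → ZMod 2) : pauliString s * pauliString s = 1 := by
  simp only [pauliString, pauliTensor_mul, pauliMatrix_mul_self, pauliTensor_one]

lemma pauliString_zero : pauliString (0 : Fin k ⊕ Fin k → ZMod 2) = 1 := by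
  simp [pauliString, pauliMatrix, pauliTensor_one]

lemma isPauliObservable_pauliString (s : Fin k ⊕ Fin k → ZMod 2) :
    IsPauliObservable (pauliString s) :=
  ⟨1, _, Or.inl rfl, fun _ => pauliMatrix_eq_one_or_eq _ _, (one_smul _ _).symm⟩

lemma IsPauliObservable.exists_eq_smul_pauliString
    {A : Matrix (Fin k → Fin 2) (Fin k → Fin 2) ℂ} (hA : IsPauliObservable A) :
    ∃ (ε : ℤˣ) (s : Fin k ⊕ Fin k → ZMod 2), A = ε • pauliString s := by
  obtain ⟨c, P, hc, hP, rfl⟩ := hA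
  choose a b hab using fun i => exists_eq_pauliMatrix (hP i)
  obtain rfl : P = fun i => pauliMatrix (a i) (b i) := funext hab
  rcases hc with rfl | rfl
  exacts [⟨1, Sum.elim a b, by simp [pauliString]⟩, ⟨-1, Sum.elim a b, by simp [pauliString]⟩]

lemma pauliString_mul_comm (s t : Fin k ⊕ Fin k → ZMod 2) :
    pauliString s * pauliString t =
      (-1 : ℤˣ) ^ sympl k s t • (pauliString t * pauliString s) := by
  simp only [pauliString, pauliTensor_mul, sympl, uzpow_sum, ← pauliTensor_smul,
    ← pauliMatrix_mul_comm]

lemma isCommutationMatrix_pauliString {V : Type*} (S : Matrix V (Fin k ⊕ Fin k) (ZMod 2)) :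
    IsCommutationMatrix (fun v => pauliString (S v)) (S * J (Fin k) (ZMod 2) * Sᵀ) := fun u v => by
  have hgram : (S * J (Fin k) (ZMod 2) * Sᵀ) u v = sympl k (S u) (S v) := by
    simp only [mul_J_mul_transpose_apply, sympl, CharTwo.sub_eq_add, add_comm]
  rw [hgram, pauliString_mul_comm]

lemma exists_pauliString_mul_eq_smul (s t : Fin k ⊕ Fin k → ZMod 2) :
    ∃ z : ℂ, pauliString s * pauliString t = z • pauliString (s + t) := by
  choose z hz using fun i =>
    exists_pauliMatrix_mul_eq_smul (s (.inl i)) (s (.inr i)) (t (.inl i)) (t (.inr i))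
  exact ⟨∏ i, z i, by simp only [pauliString, pauliTensor_mul, hz, pauliTensor_smul, Pi.add_apply]⟩

lemma exists_prod_map_pauliString_eq_smul (l : List (Fin k ⊕ Fin k → ZMod 2)) :
    ∃ z : ℂ, (l.map pauliString).prod = z • pauliString l.sum := by
  induction l with
  | nil => exact ⟨1, by simp [pauliString_zero]⟩
  | cons s l ih =>
    obtain ⟨z, hz⟩ := ih
    obtain ⟨y, hy⟩ := exists_pauliString_mul_eq_smul s l.sum
    exact ⟨z * y, by simp only [List.map_cons, List.prod_cons, List.sum_cons, hz, mul_smul_comm,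
      hy, mul_smul]⟩

lemma edgeProd_pauliString_eq_one_or_eq_neg_one {V : Type*} [LinearOrder V]
    (S : V → Fin k ⊕ Fin k → ZMod 2) {e : Finset V} (hsum : ∑ u ∈ e, S u = 0)
    (hcomm : ∀ u ∈ e, ∀ v ∈ e, Commute (pauliString (S u)) (pauliString (S v))) :
    edgeProd (fun v => pauliString (S v)) e = 1 ∨
      edgeProd (fun v => pauliString (S v)) e = -1 := by
  obtain ⟨z, hz⟩ := exists_prod_map_pauliString_eq_smul ((e.sort (· ≤ ·)).map S)
  have hscalar : edgeProd (fun v => pauliString (S v)) e = z • 1 := by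
    rw [sum_map_sort, hsum, pauliString_zero, List.map_map] at hz
    exact hz
  have hsq : (z * z) • (1 : Matrix (Fin k → Fin 2) (Fin k → Fin 2) ℂ) = 1 := by
    have := prod_map_mul_self_of_commute (fun v => pauliString_mul_self (S v))
      (l := e.sort (· ≤ ·)) (by simpa using hcomm)
    rwa [← edgeProd, hscalar, smul_mul_smul_comm, one_mul] at this
  have hz1 : z * z = 1 := by simpa using congrFun₂ hsq 0 0
  rcases mul_self_eq_one_iff.1 hz1 with rfl | rfl
  exacts [.inl (by rw [hscalar, one_smul]), .inr (by rw [hscalar, neg_smul, one_smul])]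

end Pauli

section MagicAssignment

variable {V E : Type*} [Fintype V] [LinearOrder V] {edge : E → Finset V} {le : List E} {k : ℕ}

lemma IsValidGram.indicator_vecMul_eq_zero {M : Matrix V V (ZMod 2)}
    (hM : IsValidGram edge M) (e : E) : (fun u => if u ∈ edge e then 1 else 0) ᵥ* M = 0 := by
  ext v
  simpa [vecMul, dotProduct] using hM.2.2.2 e v

variable [Fintype E]

theorem IsPauliMagicAssignment.exists_magicGram
    {α : V → Matrix (Fin k → Fin 2) (Fin k → Fin 2) ℂ} (hα : IsPauliMagicAssignment k edge α)
    (heven : ∀ v, Even (univ.filter fun e => v ∈ edge e).card) (hnd : le.Nodup)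
    (hmem : ∀ e, e ∈ le) : ∃ M : Matrix V V (ZMod 2), MagicGram edge le M ∧ M.rank ≤ 2 * k := by
  obtain ⟨hpauli, hcomm, hsign, hodd⟩ := hα
  obtain ⟨ε, S, rfl⟩ : ∃ (ε : V → ℤˣ) (S : Matrix V (Fin k ⊕ Fin k) (ZMod 2)),
      α = fun v => ε v • pauliString (S v) := by
    choose ε S hS using fun v => (hpauli v).exists_eq_smul_pauliString
    exact ⟨ε, S, funext hS⟩
  have hM := (isCommutationMatrix_pauliString S).units_smul ε
  have hsq (v : V) : (ε v • pauliString (S v)) * (ε v • pauliString (S v)) = 1 := by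
    rw [smul_mul_smul_comm, Int.units_mul_self, one_smul, pauliString_mul_self]
  refine ⟨S * J (Fin k) (ZMod 2) * Sᵀ, ⟨hM.isValidGram
    (fun v => IsUnit.of_mul_eq_one _ (hsq v)) hcomm hsign, ?_⟩, ?_⟩
  · rw [← hM.natCast_card_edgeProd_eq_neg_one hsq heven hnd hmem hsign,
      ZMod.natCast_eq_one_iff_odd]
    exact hodd
  · simpa using rank_mul_J_mul_transpose_le S

theorem MagicGram.exists_isPauliMagicAssignment {M : Matrix V V (ZMod 2)}
    (hM : MagicGram edge le M) (hrank : M.rank ≤ 2 * k)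
    (heven : ∀ v, Even (univ.filter fun e => v ∈ edge e).card) (hnd : le.Nodup)
    (hmem : ∀ e, e ∈ le) : ∃ α, IsPauliMagicAssignment k edge α := by
  obtain ⟨hvalid, hmagic⟩ := hM
  have hskew : Mᵀ = -M := by
    ext u v
    rw [hvalid.1, Matrix.neg_apply, CharTwo.neg_eq]
  obtain ⟨S, rfl, hker⟩ := exists_eq_mul_J_mul_transpose k M hskew hvalid.2.1 hrank
  have hsum (e : E) : ∑ u ∈ edge e, S u = 0 := by
    ext c
    have hker_e := congrFun (hker _ (hvalid.indicator_vecMul_eq_zero e)) c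
    exact (Finset.sum_apply c _ _).trans (by simpa [vecMul, dotProduct] using hker_e)
  have hS := isCommutationMatrix_pauliString S
  have hcomm (e : E) : ∀ u ∈ edge e, ∀ w ∈ edge e,
      Commute (pauliString (S u)) (pauliString (S w)) := fun u hu w hw => by
    have huw := hS u w
    rwa [hvalid.2.2.1 e u hu w hw, uzpow_zero, one_smul] at huw
  have hsign (e : E) := edgeProd_pauliString_eq_one_or_eq_neg_one S (hsum e) (hcomm e)
  refine ⟨fun v => pauliString (S v), fun v => isPauliObservable_pauliString _, hcomm, hsign, ?_⟩
  rw [← ZMod.natCast_eq_one_iff_odd, ← hmagic]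
  exact hS.natCast_card_edgeProd_eq_neg_one (fun v => pauliString_mul_self _) heven hnd hmem hsign

end MagicAssignment

theorem stmt1_general {V E : Type*} [Fintype V] [LinearOrder V] [Fintype E]
    (edge : E → Finset V) (heven : ∀ v, Even (univ.filter fun e => v ∈ edge e).card)
    (le : List E) (hnd : le.Nodup) (hmem : ∀ e : E, e ∈ le) (k : ℕ) :
    (∃ α : V → Matrix (Fin k → Fin 2) (Fin k → Fin 2) ℂ, IsPauliMagicAssignment k edge α) ↔
      ∃ M : Matrix V V (ZMod 2), MagicGram edge le M ∧ M.rank ≤ 2 * k :=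
  ⟨fun ⟨_, hα⟩ => hα.exists_magicGram heven hnd hmem,
    fun ⟨_, hM, hrank⟩ => hM.exists_isPauliMagicAssignment hrank heven hnd hmem⟩

/-- A proper Eulerian hypergraph has a `k`-qubit Pauli-based magic assignment
iff its valid Gram space contains a magic Gram matrix of rank at most `2k` over `ZMod 2`. -/
theorem stmt1 {V E : Type*} [Fintype V] [LinearOrder V] [Fintype E]
    (edge : E → Finset V) (hH : ProperEulerian edge)
    (le : List E) (hnd : le.Nodup) (hmem : ∀ e : E, e ∈ le)
    (k : ℕ) (hk : 1 ≤ k) :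
    (∃ α : V → Matrix (Fin k → Fin 2) (Fin k → Fin 2) ℂ,
        IsPauliMagicAssignment k edge α) ↔
      ∃ M : Matrix V V (ZMod 2), MagicGram edge le M ∧ M.rank ≤ 2 * k :=
  stmt1_general edge hH.1 le hnd hmem k
end

section
/- Let H = (V,E) be a proper Eulerian hypergraph whose valid Gram space contains at least one magic Gram matrix. Then the minimum k ≥ 1 such that H has a k-qubit Pauli-based magic assignment equals one half of the minimum rank over ZMod 2 taken over all magic Gram matrices in the valid Gram space of H. -/
open Matrix Finset

/-!
Label each `k`-qubit Pauli observable by a vector of `(ZMod 2)^{2k}`; two observables commute up to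
the sign given by the symplectic form of their labels. Sort the product of all the observables along
the concatenated vertex list: every inversion contributes the sign of a commutation, and since each
vertex occurs an even number of times the sorted product is the identity. Hence an odd number of
hyperedges has product `-I` exactly when the symplectic Gram matrix of the labels has inversion sum
`1`. This Gram matrix has rank at most `2 * k`. Conversely, a valid Gram matrix is alternating, so
by symplectic elimination it is the Gram matrix of vectors with `2 * k = rank` coordinates, each
coordinate being in its column space. The coordinates therefore sum to zero over every hyperedge,
which makes the hyperedge products scalar.
-/

namespace PauliMagic

section Sign

lemma neg_one_uzpow_eq_one_iff {x : ZMod 2} : (-1 : ℤˣ) ^ x = 1 ↔ x = 0 := by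
  revert x; decide

lemma neg_one_uzpow_eq_neg_one_iff {x : ZMod 2} : (-1 : ℤˣ) ^ x = -1 ↔ x = 1 := by
  revert x; decide

lemma uzpow_sum {ι : Type*} (u : ℤˣ) (s : Finset ι) (f : ι → ZMod 2) :
    u ^ ∑ i ∈ s, f i = ∏ i ∈ s, u ^ f i := by
  classical
  induction s using Finset.induction_on with
  | empty => simp
  | insert a s ha ih => rw [sum_insert ha, prod_insert ha, uzpow_add, ih]

variable {R : Type*} [Ring R]

lemma eq_one_of_units_int_smul_eq_self (hneg : (-1 : R) ≠ 1) {u : ℤˣ} {a : R} (ha : IsUnit a)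
    (h : u • a = a) : u = 1 := by
  refine (Int.units_eq_one_or u).resolve_right fun hu => hneg ?_
  rw [hu, Units.neg_smul, one_smul, ← neg_one_mul] at h
  exact ha.mul_eq_right.1 h

lemma prod_map_eq_neg_one_pow_countP {E : Type*} (β : E → R) [DecidablePred (β · = -1)]
    (hβ : ∀ e, β e = 1 ∨ β e = -1) (L : List E) :
    (L.map β).prod = (-1) ^ L.countP (β · = -1) := by
  induction L with
  | nil => simp
  | cons e L ih =>
    rw [List.map_cons, List.prod_cons, ih]
    by_cases he : β e = -1
    · rw [List.countP_cons_of_pos (by simpa using he), pow_succ', he]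
    · rw [List.countP_cons_of_neg (by simpa using he), (hβ e).resolve_right he, one_mul]

end Sign

section InversionSum

variable {V : Type*} [LinearOrder V] (M : Matrix V V (ZMod 2))

lemma inversionSum_nil : inversionSum M [] = 0 := by
  simp [inversionSum]

lemma inversionSum_cons (a : V) (L : List V) :
    inversionSum M (a :: L) =
      (L.map fun x => if x < a then M a x else 0).sum + inversionSum M L := by
  rw [← Fin.sum_univ_fun_getElem]
  unfold inversionSum
  change (∑ i : Fin (L.length + 1), ∑ j : Fin (L.length + 1), _) = _
  simp [Fin.sum_univ_succ]

variable {M} in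
lemma inversionSum_eq_zero {L : List V} (h : ∀ u ∈ L, ∀ v ∈ L, M u v = 0) :
    inversionSum M L = 0 :=
  sum_eq_zero fun i _ => sum_eq_zero fun j _ => by
    rw [h _ (L.get_mem i) _ (L.get_mem j), ite_self]

end InversionSum

/-- The family `α` commutes up to the signs recorded by `M`; for Pauli observables, `M` is the
Gram matrix of their labels under the symplectic form. -/
def HasCommutationMatrix {V R : Type*} [Ring R] (α : V → R) (M : Matrix V V (ZMod 2)) : Prop :=
  ∀ u v, α u * α v = (-1 : ℤˣ) ^ M u v • (α v * α u)

namespace HasCommutationMatrix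

variable {V R : Type*} [Ring R] {α : V → R} {M : Matrix V V (ZMod 2)}

lemma commute (hα : HasCommutationMatrix α M) {u v : V} (huv : M u v = 0) :
    Commute (α u) (α v) := by
  rw [Commute, SemiconjBy, hα, huv, uzpow_zero, one_smul]

lemma units_smul (hα : HasCommutationMatrix α M) (u : V → ℤˣ) :
    HasCommutationMatrix (fun v => u v • α v) M := fun v w => by
  rw [smul_mul_smul_comm, hα, smul_mul_smul_comm, smul_comm, mul_comm (u v)]

lemma prod_map_mul (hα : HasCommutationMatrix α M) (v : V) (L : List V) :
    (L.map α).prod * α v = (-1 : ℤˣ) ^ (L.map (M · v)).sum • (α v * (L.map α).prod) := by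
  induction L with
  | nil => simp
  | cons b L ih =>
    simp only [List.map_cons, List.prod_cons, List.sum_cons]
    rw [mul_assoc, ih, mul_smul_comm, ← mul_assoc, hα b v, smul_mul_assoc, smul_smul, mul_assoc,
      uzpow_add, mul_comm]

variable [LinearOrder V]

lemma mul_prod_map_eq_smul_prod_orderedInsert (hα : HasCommutationMatrix α M) (a : V)
    {L : List V} (hL : L.Pairwise (· ≤ ·)) :
    α a * (L.map α).prod = (-1 : ℤˣ) ^ (L.map fun x => if x < a then M a x else 0).sum •
      ((L.orderedInsert (· ≤ ·) a).map α).prod := by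
  induction L with
  | nil => simp
  | cons b L ih =>
    rw [List.orderedInsert_cons]
    split_ifs with hab
    · have hge : ∀ x ∈ b :: L, a ≤ x :=
        List.forall_mem_cons.2
          ⟨hab, fun x hx => hab.trans (List.rel_of_pairwise_cons hL hx)⟩
      have hzero : ((b :: L).map fun x => if x < a then M a x else 0).sum = 0 :=
        List.sum_eq_zero fun y hy => by
          obtain ⟨x, hx, rfl⟩ := List.mem_map.1 hy
          exact if_neg (hge x hx).not_gt
      rw [hzero, uzpow_zero, one_smul, ← List.prod_cons, ← List.map_cons]
    · simp only [List.map_cons, List.prod_cons, List.sum_cons]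
      rw [if_pos (not_le.1 hab), ← mul_assoc, hα a b, smul_mul_assoc, mul_assoc, ih hL.of_cons,
        mul_smul_comm, smul_smul, uzpow_add]

lemma prod_map_eq_smul_prod_insertionSort (hα : HasCommutationMatrix α M) (L : List V) :
    (L.map α).prod =
      (-1 : ℤˣ) ^ inversionSum M L • ((L.insertionSort (· ≤ ·)).map α).prod := by
  induction L with
  | nil => simp [inversionSum_nil]
  | cons a L ih =>
    have hperm := (List.perm_insertionSort (· ≤ ·) L).map fun x => if x < a then M a x else 0
    rw [List.map_cons, List.prod_cons, ih, mul_smul_comm,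
      hα.mul_prod_map_eq_smul_prod_orderedInsert a (List.pairwise_insertionSort _ _), smul_smul,
      inversionSum_cons, hperm.sum_eq, add_comm, uzpow_add, List.insertionSort_cons]

end HasCommutationMatrix

lemma prod_map_eq_one_of_even_count {V R : Type*} [PartialOrder V] [DecidableEq V] [Monoid R]
    {α : V → R}
    (hsq : ∀ v, α v * α v = 1) {L : List V} (hL : L.Pairwise (· ≤ ·))
    (heven : ∀ v, Even (L.count v)) : (L.map α).prod = 1 := by
  induction L using List.twoStepInduction with
  | nil => simp
  | singleton a => exact absurd (heven a) (by simp)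
  | cons_cons a b L ih _ =>
    obtain rfl : a = b := by
      have hmem : a ∈ b :: L := by
        by_contra hmem
        have := heven a
        rw [List.count_cons_self, List.count_eq_zero_of_not_mem hmem] at this
        simp at this
      rcases List.mem_cons.1 hmem with h | h
      · exact h
      · exact le_antisymm (List.rel_of_pairwise_cons hL List.mem_cons_self)
          (List.rel_of_pairwise_cons hL.of_cons h)
    rw [List.map_cons, List.map_cons, List.prod_cons, List.prod_cons, ← mul_assoc, hsq, one_mul]
    refine ih (by grind) fun v => ?_
    have := heven v
    grind

lemma HasCommutationMatrix.prod_map_eq_of_even_count {V R : Type*} [LinearOrder V] [Ring R]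
    {α : V → R} {M : Matrix V V (ZMod 2)} (hα : HasCommutationMatrix α M)
    (hsq : ∀ v, α v * α v = 1) {L : List V} (heven : ∀ v, Even (L.count v)) :
    (L.map α).prod = (-1 : ℤˣ) ^ inversionSum M L • 1 := by
  rw [hα.prod_map_eq_smul_prod_insertionSort,
    prod_map_eq_one_of_even_count hsq (List.pairwise_insertionSort _ _)]
  exact fun v => (List.perm_insertionSort (· ≤ ·) L).count_eq v ▸ heven v

lemma HasCommutationMatrix.prod_map_mul_self {V R : Type*} [LinearOrder V] [Ring R]
    {α : V → R} {M : Matrix V V (ZMod 2)} (hα : HasCommutationMatrix α M)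
    (hsq : ∀ v, α v * α v = 1) {L : List V} (hL : ∀ u ∈ L, ∀ v ∈ L, M u v = 0) :
    (L.map α).prod * (L.map α).prod = 1 := by
  rw [← List.prod_append, ← List.map_append, hα.prod_map_eq_of_even_count hsq (by simp),
    inversionSum_eq_zero (by simpa using hL)]
  simp

section VertexList

variable {V E : Type*} [LinearOrder V]

lemma sum_map_sort {A : Type*} [AddCommMonoid A] (s : Finset V) (f : V → A) :
    ((s.sort (· ≤ ·)).map f).sum = ∑ v ∈ s, f v := by
  rw [← List.sum_toFinset f (s.sort_nodup _), sort_toFinset]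

lemma count_vertexList (edge : E → Finset V) (le : List E) (v : V) :
    (vertexList edge le).count v = le.countP (v ∈ edge ·) := by
  induction le with
  | nil => rfl
  | cons e le ih =>
    rw [vertexList, List.map_cons, List.flatten_cons, List.count_append, ← vertexList, ih,
      List.countP_cons, add_comm, List.Nodup.count (sort_nodup _ _)]
    simp

lemma prod_map_vertexList {n : Type*} [Fintype n] [DecidableEq n] (α : V → Matrix n n ℂ)
    (edge : E → Finset V) (le : List E) :
    ((vertexList edge le).map α).prod = (le.map fun e => edgeProd α (edge e)).prod := by
  rw [vertexList, List.map_flatten, List.prod_flatten, List.map_map, List.map_map]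
  rfl

lemma countP_eq_card_filter [Fintype E] {le : List E} (hnd : le.Nodup) (hmem : ∀ e, e ∈ le)
    (p : E → Prop) [DecidablePred p] : le.countP p = #{e | p e} := by
  classical
  have hfilter : (le.filter p).toFinset = ({e | p e} : Finset E) := by
    ext e
    simp [hmem]
  rw [← hfilter, List.toFinset_card_of_nodup (hnd.filter _), List.countP_eq_length_filter]

end VertexList

section Gram

lemma neg_one_ne_one_matrix {n R : Type*} [DecidableEq n] [Nonempty n] [Ring R] [CharZero R] :
    (-1 : Matrix n n R) ≠ 1 := by
  obtain ⟨i⟩ := ‹Nonempty n›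
  intro h
  have hii : (-1 : Matrix n n R) i i = (1 : Matrix n n R) i i := congrFun₂ h i i
  rw [neg_apply, one_apply_eq] at hii
  norm_num at hii

variable {V E n : Type*} [Fintype n] [DecidableEq n] [Nonempty n]
  {α : V → Matrix n n ℂ} {M : Matrix V V (ZMod 2)} {edge : E → Finset V}

namespace HasCommutationMatrix

variable [LinearOrder V]

lemma isValidGram (hα : HasCommutationMatrix α M) (hsq : ∀ v, α v * α v = 1)
    (hcomm : ∀ e, ∀ u ∈ edge e, ∀ v ∈ edge e, Commute (α u) (α v))
    (hprod : ∀ e, edgeProd α (edge e) = 1 ∨ edgeProd α (edge e) = -1) :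
    IsValidGram edge M := by
  have hunit (v : V) : IsUnit (α v) := IsUnit.of_mul_eq_one _ (hsq v)
  have eq_zero {x : ZMod 2} {A : Matrix n n ℂ} (hA : IsUnit A) (h : (-1 : ℤˣ) ^ x • A = A) :
      x = 0 :=
    neg_one_uzpow_eq_one_iff.1 (eq_one_of_units_int_smul_eq_self neg_one_ne_one_matrix hA h)
  have hzero {u v : V} (h : Commute (α u) (α v)) : M u v = 0 :=
    eq_zero ((hunit v).mul (hunit u)) ((hα u v).symm.trans h)
  refine ⟨.ext fun u v => ?_, fun v => hzero (.refl _),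
    fun e u hu v hv => hzero (hcomm e u hu v hv), fun e v => ?_⟩
  · have hsum : M v u + M u v = 0 := eq_zero ((hunit v).mul (hunit u)) <| by
      rw [uzpow_add, mul_smul, ← hα, ← hα]
    exact CharTwo.add_eq_zero.1 hsum
  · rw [← sum_map_sort]
    refine eq_zero (hunit v) ?_
    have h := hα.prod_map_mul v ((edge e).sort (· ≤ ·))
    change edgeProd α (edge e) * α v = _ • (α v * edgeProd α (edge e)) at h
    rcases hprod e with he | he <;> rw [he] at h <;> simpa using h.symm

variable [Fintype E]

lemma odd_card_iff (hα : HasCommutationMatrix α M) (hsq : ∀ v, α v * α v = 1)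
    (heven : ∀ v, Even #{e | v ∈ edge e})
    (hprod : ∀ e, edgeProd α (edge e) = 1 ∨ edgeProd α (edge e) = -1)
    {le : List E} (hnd : le.Nodup) (hmem : ∀ e, e ∈ le) :
    Odd (Nat.card {e // edgeProd α (edge e) = -1}) ↔
      inversionSum M (vertexList edge le) = 1 := by
  classical
  have hneg : (-1 : Matrix n n ℂ) ≠ 1 := neg_one_ne_one_matrix
  have hcard : Nat.card {e // edgeProd α (edge e) = -1} =
      le.countP (fun e => edgeProd α (edge e) = -1) := by
    rw [countP_eq_card_filter hnd hmem, Nat.card_eq_fintype_card, Fintype.card_subtype]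
  have hcount (v : V) : Even ((vertexList edge le).count v) := by
    rw [count_vertexList, countP_eq_card_filter hnd hmem]
    exact heven v
  have hsign : (-1 : Matrix n n ℂ) ^ Nat.card {e // edgeProd α (edge e) = -1} =
      (-1 : ℤˣ) ^ inversionSum M (vertexList edge le) • 1 := by
    rw [hcard, ← prod_map_eq_neg_one_pow_countP _ hprod, ← prod_map_vertexList,
      hα.prod_map_eq_of_even_count hsq hcount]
  rw [← neg_one_pow_eq_neg_one_iff_odd hneg, hsign, ← neg_one_uzpow_eq_neg_one_iff]
  refine ⟨fun h => ?_, fun h => by rw [h, Units.neg_smul, one_smul]⟩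
  refine (Int.units_eq_one_or _).resolve_left fun h1 => hneg ?_
  rw [← h, h1, one_smul]

end HasCommutationMatrix

end Gram

section Alternating

variable {V K : Type*} [Field K]

lemma finrank_inf_ker_lt {W : Type*} [AddCommGroup W] [Module K W] [FiniteDimensional K W]
    {S : Submodule K W} {φ : W →ₗ[K] K} {x : W} (hx : x ∈ S) (hφ : φ x ≠ 0) :
    Module.finrank K ↥(S ⊓ φ.ker) < Module.finrank K S :=
  Submodule.finrank_lt_finrank_of_lt <| inf_le_left.lt_of_not_ge fun h => hφ (h hx).2

/-- Alternating matrices, i.e. matrices of alternating bilinear forms; in characteristic two these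
are the symmetric matrices with zero diagonal. -/
structure IsAlternating (M : Matrix V V K) : Prop where
  apply_swap : ∀ u v, M v u = -M u v
  apply_self : ∀ v, M v v = 0

/-- Splits off from `M` the hyperbolic plane spanned by the basis vectors `a` and `b`; meaningful
when `M a b ≠ 0`. -/
def hyperbolicReduction (M : Matrix V V K) (a b : V) : Matrix V V K :=
  of fun u v => M u v - (M a b)⁻¹ * (M u a * M v b - M u b * M v a)

lemma range_hyperbolicReduction_le [Fintype V] (M : Matrix V V K) (a b : V) :
    (hyperbolicReduction M a b).mulVecLin.range ≤ M.mulVecLin.range := by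
  classical
  have h : hyperbolicReduction M a b =
      M * (1 - (M a b)⁻¹ • (vecMulVec (Pi.single a 1) (M.col b) -
        vecMulVec (Pi.single b 1) (M.col a))) := by
    ext u v
    simp [hyperbolicReduction, Matrix.mul_sub, mul_vecMulVec, vecMulVec_apply]
  rw [h, mulVecLin_mul]
  exact LinearMap.range_comp_le_range _ _

lemma col_mem_range [Fintype V] (M : Matrix V V K) (v : V) : M.col v ∈ M.mulVecLin.range := by
  classical
  exact ⟨Pi.single v 1, by simp⟩

lemma rank_mul_J_mul_transpose_le [Fintype V] {k : ℕ} (X : Matrix V (Fin k ⊕ Fin k) K) :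
    (X * J (Fin k) K * Xᵀ).rank ≤ 2 * k := by
  rw [Matrix.mul_assoc]
  calc _ ≤ X.rank := rank_mul_le_left _ _
    _ ≤ Fintype.card (Fin k ⊕ Fin k) := rank_le_card_width _
    _ = 2 * k := by simp [two_mul]

namespace IsAlternating

variable {M : Matrix V V K}

protected lemma hyperbolicReduction (hM : IsAlternating M) (a b : V) :
    IsAlternating (hyperbolicReduction M a b) where
  apply_swap u v := by
    simp only [hyperbolicReduction, of_apply, hM.apply_swap u v]
    ring
  apply_self v := by
    simp only [hyperbolicReduction, of_apply, hM.apply_self]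
    ring

lemma hyperbolicReduction_apply_left (hM : IsAlternating M) {a b : V} (hab : M a b ≠ 0) (v : V) :
    hyperbolicReduction M a b a v = 0 := by
  simp only [hyperbolicReduction, of_apply, hM.apply_self, hM.apply_swap a v]
  field

lemma hyperbolicReduction_apply_right (hM : IsAlternating M) {a b : V} (hab : M a b ≠ 0) (v : V) :
    hyperbolicReduction M a b b v = 0 := by
  simp only [hyperbolicReduction, of_apply, hM.apply_self, hM.apply_swap a b,
    hM.apply_swap b v]
  field

variable [Fintype V]

lemma rank_hyperbolicReduction_add_two_le (hM : IsAlternating M) {a b : V} (hab : M a b ≠ 0) :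
    (hyperbolicReduction M a b).rank + 2 ≤ M.rank := by
  let R : Submodule K (V → K) := M.mulVecLin.range
  let φ (v : V) : (V → K) →ₗ[K] K := LinearMap.proj v
  have hle : (hyperbolicReduction M a b).mulVecLin.range ≤
      (R ⊓ (φ a).ker) ⊓ (φ b).ker := by
    refine le_inf (le_inf (range_hyperbolicReduction_le M a b) ?_) ?_
    · rintro _ ⟨x, rfl⟩
      simp [φ, mulVec, dotProduct, hM.hyperbolicReduction_apply_left hab]
    · rintro _ ⟨x, rfl⟩
      simp [φ, mulVec, dotProduct, hM.hyperbolicReduction_apply_right hab]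
  have hb : φ b (M.col a) ≠ 0 := by simpa [φ, hM.apply_swap a b] using hab
  have ha : φ a (M.col b) ≠ 0 := hab
  have hab' := finrank_inf_ker_lt (S := R ⊓ (φ a).ker)
    ⟨col_mem_range M a, hM.apply_self a⟩ hb
  have ha' := finrank_inf_ker_lt (S := R) (col_mem_range M b) ha
  have hle' := Submodule.finrank_mono hle
  change _ + 2 ≤ Module.finrank K R
  unfold rank
  omega

theorem exists_sum_hyperbolic (hM : IsAlternating M) :
    ∃ (k : ℕ) (f g : Fin k → V → K), 2 * k ≤ M.rank ∧
      (∀ i, f i ∈ M.mulVecLin.range) ∧ (∀ i, g i ∈ M.mulVecLin.range) ∧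
      ∀ u v, M u v = ∑ i, (f i u * g i v - g i u * f i v) := by
  induction hr : M.rank using Nat.strong_induction_on generalizing M with
  | _ r ih =>
  subst hr
  by_cases hzero : ∀ a b, M a b = 0
  · exact ⟨0, Fin.elim0, Fin.elim0, by simp, nofun, nofun, by simpa using hzero⟩
  push Not at hzero
  obtain ⟨a, b, hab⟩ := hzero
  have hrank := hM.rank_hyperbolicReduction_add_two_le hab
  have hrange := range_hyperbolicReduction_le M a b
  obtain ⟨k, f, g, hk, hf, hg, hfg⟩ := ih _ (by omega) (hM.hyperbolicReduction a b) rfl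
  refine ⟨k + 1, Fin.cons ((M a b)⁻¹ • M.col a) f, Fin.cons (M.col b) g, by omega,
    Fin.cases (Submodule.smul_mem _ _ (col_mem_range M a)) fun i => hrange (hf i),
    Fin.cases (col_mem_range M b) fun i => hrange (hg i), fun u v => ?_⟩
  simp only [Fin.sum_univ_succ, Fin.cons_zero, Fin.cons_succ, ← hfg,
    hyperbolicReduction, of_apply, col_apply, Pi.smul_apply, smul_eq_mul]
  ring

theorem exists_eq_mul_J_mul_transpose (hM : IsAlternating M) :
    ∃ (k : ℕ) (X Y : Matrix V (Fin k ⊕ Fin k) K),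
      M.rank = 2 * k ∧ M = X * J (Fin k) K * Xᵀ ∧ X = M * Y := by
  obtain ⟨k, f, g, hk, hf, hg, hfg⟩ := hM.exists_sum_hyperbolic
  choose p hp using hf
  choose q hq using hg
  let X : Matrix V (Fin k ⊕ Fin k) K := fromCols (of g)ᵀ (of f)ᵀ
  have hX : M = X * J (Fin k) K * Xᵀ := by
    ext u v
    simp [X, J, transpose_fromCols, fromCols_mul_fromBlocks, mul_apply, hfg, sum_add_distrib,
      sub_eq_add_neg]
  refine ⟨k, X, fromCols (of q)ᵀ (of p)ᵀ, hk.antisymm' ?_, hX, ?_⟩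
  · exact hX ▸ rank_mul_J_mul_transpose_le X
  · rw [mul_fromCols]
    exact congrArg₂ fromCols (ext fun u i => (congrFun (hq i) u).symm)
      (ext fun u i => (congrFun (hp i) u).symm)

end IsAlternating

end Alternating

section SymplGram

variable {V : Type*} {k : ℕ}

/-- The Gram matrix of a family of vectors with respect to the symplectic form `sympl`. -/
def symplGram (x : V → Fin k ⊕ Fin k → ZMod 2) : Matrix V V (ZMod 2) :=
  of fun u v => sympl k (x u) (x v)

lemma symplGram_eq_mul_J_mul_transpose (x : V → Fin k ⊕ Fin k → ZMod 2) :
    symplGram x = of x * J (Fin k) (ZMod 2) * (of x)ᵀ := by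
  ext u v
  simp [symplGram, sympl, mul_apply, J, fromBlocks, sum_add_distrib, one_apply,
    CharTwo.neg_eq, add_comm]

lemma rank_symplGram_le [Fintype V] (x : V → Fin k ⊕ Fin k → ZMod 2) :
    (symplGram x).rank ≤ 2 * k :=
  symplGram_eq_mul_J_mul_transpose x ▸ rank_mul_J_mul_transpose_le (of x)

theorem exists_rank_eq_and_eq_symplGram [Fintype V] {E : Type*} {edge : E → Finset V}
    {M : Matrix V V (ZMod 2)} (hM : IsValidGram edge M) :
    ∃ (k : ℕ) (x : V → Fin k ⊕ Fin k → ZMod 2),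
      M.rank = 2 * k ∧ M = symplGram x ∧ ∀ e, ∑ v ∈ edge e, x v = 0 := by
  obtain ⟨hsymm, hdiag, -, hsum⟩ := hM
  have halt : IsAlternating M :=
    ⟨fun u v => by rw [CharTwo.neg_eq, hsymm.apply], hdiag⟩
  obtain ⟨k, X, Y, hk, hX, hXY⟩ := halt.exists_eq_mul_J_mul_transpose
  refine ⟨k, X.row, hk, hX.trans (symplGram_eq_mul_J_mul_transpose X.row).symm, fun e => ?_⟩
  ext j
  calc (∑ u ∈ edge e, X.row u) j = ∑ u ∈ edge e, ∑ v, M u v * Y v j := by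
        rw [Finset.sum_apply]
        exact sum_congr rfl fun u _ => by rw [hXY, row_apply, mul_apply]
    _ = ∑ v, (∑ u ∈ edge e, M u v) * Y v j := by
        rw [sum_comm]
        exact sum_congr rfl fun v _ => (sum_mul ..).symm
    _ = 0 := sum_eq_zero fun v _ => by rw [hsum, zero_mul]

end SymplGram

section Pauli

/-- The Pauli matrix with label `(a, b)`: `(0, 0)`, `(0, 1)`, `(1, 0)`, `(1, 1)` label `I`, `Z`, `X`
and `Y`. -/
noncomputable def pauli (a b : ZMod 2) : Matrix (Fin 2) (Fin 2) ℂ :=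
  if a = 0 then if b = 0 then 1 else PZ else if b = 0 then PX else PY

lemma zmod_two_cases (a : ZMod 2) : a = 0 ∨ a = 1 := by revert a; decide

lemma pauli_mul_self (a b : ZMod 2) : pauli a b * pauli a b = 1 := by
  obtain rfl | rfl := zmod_two_cases a <;> obtain rfl | rfl := zmod_two_cases b <;>
    ext i j <;> fin_cases i <;> fin_cases j <;> simp [pauli, PX, PY, PZ]

lemma pauli_mul_comm (a b c d : ZMod 2) :
    pauli a b * pauli c d = (-1 : ℤˣ) ^ (a * d + b * c) • (pauli c d * pauli a b) := by
  have h : (1 + 1 : ZMod 2) = 0 := rfl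
  obtain rfl | rfl := zmod_two_cases a <;> obtain rfl | rfl := zmod_two_cases b <;>
  obtain rfl | rfl := zmod_two_cases c <;> obtain rfl | rfl := zmod_two_cases d <;>
    ext i j <;> fin_cases i <;> fin_cases j <;>
    simp [pauli, PX, PY, PZ, h, uzpow_zero, Units.neg_smul]

lemma exists_pauli_mul_eq_smul (a b c d : ZMod 2) :
    ∃ z : ℂ, pauli a b * pauli c d = z • pauli (a + c) (b + d) := by
  -- The right-hand Pauli matrix squares to `1`, so tracing against it extracts the coefficient.
  refine ⟨(pauli a b * pauli c d * pauli (a + c) (b + d)).trace / 2, ?_⟩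
  have h : (1 + 1 : ZMod 2) = 0 := rfl
  obtain rfl | rfl := zmod_two_cases a <;> obtain rfl | rfl := zmod_two_cases b <;>
  obtain rfl | rfl := zmod_two_cases c <;> obtain rfl | rfl := zmod_two_cases d <;>
    ext i j <;> fin_cases i <;> fin_cases j <;>
    simp [pauli, PX, PY, PZ, trace_fin_two, h]

end Pauli

section PauliTensor

variable {k : ℕ}

lemma pauliTensor_one : pauliTensor k (fun _ => 1) = 1 := by
  ext f g
  simp [pauliTensor, one_apply, Finset.prod_ite_zero, funext_iff]

lemma pauliTensor_mul (P Q : Fin k → Matrix (Fin 2) (Fin 2) ℂ) :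
    pauliTensor k P * pauliTensor k Q = pauliTensor k fun i => P i * Q i := by
  ext f g
  simp only [pauliTensor, mul_apply, of_apply, ← prod_mul_distrib, Finset.prod_univ_sum,
    Fintype.piFinset_univ]

lemma pauliTensor_smul {S : Type*} [CommMonoid S] [MulAction S ℂ] [IsScalarTower S ℂ ℂ]
    [SMulCommClass S ℂ ℂ] (c : Fin k → S) (P : Fin k → Matrix (Fin 2) (Fin 2) ℂ) :
    pauliTensor k (fun i => c i • P i) = (∏ i, c i) • pauliTensor k P := by
  ext f g
  simp [pauliTensor, prod_smul]

end PauliTensor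

section PauliString

variable {V : Type*} {k : ℕ}

/-- The tensor product of Pauli matrices with symplectic label `s`. -/
noncomputable def pauliString (s : Fin k ⊕ Fin k → ZMod 2) :
    Matrix (Fin k → Fin 2) (Fin k → Fin 2) ℂ :=
  pauliTensor k fun i => pauli (s (.inl i)) (s (.inr i))

lemma pauliString_zero : pauliString (0 : Fin k ⊕ Fin k → ZMod 2) = 1 := by
  simp [pauliString, pauli, pauliTensor_one]

lemma pauliString_mul_self (s : Fin k ⊕ Fin k → ZMod 2) : pauliString s * pauliString s = 1 := by
  simp only [pauliString, pauliTensor_mul, pauli_mul_self, pauliTensor_one]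

lemma hasCommutationMatrix_pauliString (x : V → Fin k ⊕ Fin k → ZMod 2) :
    HasCommutationMatrix (fun v => pauliString (x v)) (symplGram x) := fun u v => by
  simp only [pauliString, pauliTensor_mul, symplGram, of_apply, sympl, uzpow_sum,
    ← pauliTensor_smul, ← pauli_mul_comm]

lemma exists_pauliString_mul_eq_smul (s t : Fin k ⊕ Fin k → ZMod 2) :
    ∃ z : ℂ, pauliString s * pauliString t = z • pauliString (s + t) := by
  choose z hz using fun i =>
    exists_pauli_mul_eq_smul (s (.inl i)) (s (.inr i)) (t (.inl i)) (t (.inr i))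
  refine ⟨∏ i, z i, ?_⟩
  simp only [pauliString, pauliTensor_mul, hz, pauliTensor_smul, Pi.add_apply]

lemma exists_prod_map_pauliString_eq_smul (x : V → Fin k ⊕ Fin k → ZMod 2) (L : List V) :
    ∃ z : ℂ, (L.map fun v => pauliString (x v)).prod = z • pauliString (L.map x).sum := by
  induction L with
  | nil => exact ⟨1, by simp [pauliString_zero]⟩
  | cons v L ih =>
    obtain ⟨z, hz⟩ := ih
    obtain ⟨w, hw⟩ := exists_pauliString_mul_eq_smul (x v) (L.map x).sum
    exact ⟨z * w, by simp [hz, hw, smul_smul]⟩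

lemma exists_eq_pauli_iff {P : Matrix (Fin 2) (Fin 2) ℂ} :
    (∃ a b, P = pauli a b) ↔ P = 1 ∨ P = PX ∨ P = PY ∨ P = PZ := by
  constructor
  · rintro ⟨a, b, rfl⟩
    unfold pauli
    split_ifs <;> simp
  · rintro (rfl | rfl | rfl | rfl)
    exacts [⟨0, 0, by simp [pauli]⟩, ⟨1, 0, by simp [pauli]⟩, ⟨1, 1, by simp [pauli]⟩,
      ⟨0, 1, by simp [pauli]⟩]

lemma isPauliObservable_iff {A : Matrix (Fin k → Fin 2) (Fin k → Fin 2) ℂ} :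
    IsPauliObservable A ↔ ∃ (u : ℤˣ) (s : Fin k ⊕ Fin k → ZMod 2), A = u • pauliString s := by
  constructor
  · rintro ⟨ε, P, hε, hP, rfl⟩
    choose a b hab using fun i => exists_eq_pauli_iff.2 (hP i)
    have hP' : pauliTensor k P = pauliString (Sum.elim a b) := by
      simp only [pauliString, Sum.elim_inl, Sum.elim_inr, ← hab]
    rcases hε with rfl | rfl
    exacts [⟨1, _, by rw [hP', one_smul, one_smul]⟩,
      ⟨-1, _, by rw [hP', Units.neg_smul, neg_smul, one_smul, one_smul]⟩]
  · rintro ⟨u, s, rfl⟩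
    refine ⟨(u : ℤ), _, ?_, fun i => exists_eq_pauli_iff.1 ⟨s (.inl i), s (.inr i), rfl⟩, ?_⟩
    · rcases Int.units_eq_one_or u with rfl | rfl <;> simp
    · rw [Int.cast_smul_eq_zsmul]
      rfl

end PauliString

section MagicAssignment

variable {V E : Type*} [LinearOrder V] [Fintype E] {edge : E → Finset V} {k : ℕ}

lemma edgeProd_pauliString_eq_one_or_neg_one {x : V → Fin k ⊕ Fin k → ZMod 2} {s : Finset V}
    (horth : ∀ u ∈ s, ∀ v ∈ s, symplGram x u v = 0) (hsum : ∑ v ∈ s, x v = 0) :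
    edgeProd (fun v => pauliString (x v)) s = 1 ∨
      edgeProd (fun v => pauliString (x v)) s = -1 := by
  have hsq : edgeProd (fun v => pauliString (x v)) s *
      edgeProd (fun v => pauliString (x v)) s = 1 :=
    (hasCommutationMatrix_pauliString x).prod_map_mul_self (fun v => pauliString_mul_self (x v))
      (by simpa only [mem_sort] using horth)
  obtain ⟨z, hz⟩ := exists_prod_map_pauliString_eq_smul x (s.sort (· ≤ ·))
  rw [sum_map_sort, hsum, pauliString_zero, ← edgeProd] at hz
  rw [hz, smul_mul_smul_comm, mul_one] at hsq
  have hz2 : z * z = 1 := by simpa using congrFun₂ hsq 0 0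
  rcases mul_self_eq_one_iff.1 hz2 with rfl | rfl
  · exact .inl (by rw [hz, one_smul])
  · exact .inr (by rw [hz, neg_smul, one_smul])

variable {le : List E}

theorem exists_magicGram_rank_le [Fintype V] (heven : ∀ v, Even #{e | v ∈ edge e})
    (hnd : le.Nodup) (hmem : ∀ e, e ∈ le) {α : V → Matrix (Fin k → Fin 2) (Fin k → Fin 2) ℂ}
    (hα : IsPauliMagicAssignment k edge α) : ∃ M, MagicGram edge le M ∧ M.rank ≤ 2 * k := by
  obtain ⟨hobs, hcomm, hprod, hodd⟩ := hα
  choose u x hx using fun v => isPauliObservable_iff.1 (hobs v)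
  obtain rfl : α = fun v => u v • pauliString (x v) := funext hx
  have hM := (hasCommutationMatrix_pauliString x).units_smul u
  have hsq (v : V) : (u v • pauliString (x v)) * (u v • pauliString (x v)) = 1 := by
    rw [smul_mul_smul_comm, Int.units_mul_self, one_smul, pauliString_mul_self]
  exact ⟨symplGram x, ⟨hM.isValidGram hsq hcomm hprod,
    (hM.odd_card_iff hsq heven hprod hnd hmem).1 hodd⟩, rank_symplGram_le x⟩

theorem exists_isPauliMagicAssignment [Fintype V] (heven : ∀ v, Even #{e | v ∈ edge e})
    (hnd : le.Nodup) (hmem : ∀ e, e ∈ le) {M : Matrix V V (ZMod 2)} (hM : MagicGram edge le M) :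
    ∃ k, 1 ≤ k ∧ 2 * k = M.rank ∧ ∃ α : V → Matrix (Fin k → Fin 2) (Fin k → Fin 2) ℂ,
      IsPauliMagicAssignment k edge α := by
  obtain ⟨hvalid, hmagic⟩ := hM
  obtain ⟨k, x, hk, rfl, hsum⟩ := exists_rank_eq_and_eq_symplGram hvalid
  have hcomm := hasCommutationMatrix_pauliString x
  have hprod (e : E) := edgeProd_pauliString_eq_one_or_neg_one (hvalid.2.2.1 e) (hsum e)
  refine ⟨k, Nat.one_le_iff_ne_zero.2 ?_, hk.symm, fun v => pauliString (x v),
    fun v => isPauliObservable_iff.2 ⟨1, x v, (one_smul ..).symm⟩,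
    fun e u hu v hv => hcomm.commute (hvalid.2.2.1 e u hu v hv), hprod,
    (hcomm.odd_card_iff (fun v => pauliString_mul_self _) heven hprod hnd hmem).2 hmagic⟩
  rintro rfl
  rw [inversionSum_eq_zero fun u _ v _ => by simp [symplGram, sympl]] at hmagic
  exact zero_ne_one hmagic

end MagicAssignment

end PauliMagic

theorem stmt4_general {V E : Type*} [Fintype V] [LinearOrder V] [Fintype E]
    (edge : E → Finset V) (heven : ∀ v : V, Even #{e : E | v ∈ edge e})
    (le : List E) (hnd : le.Nodup) (hmem : ∀ e : E, e ∈ le) (rmin : ℕ)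
    (hr : IsLeast {r : ℕ | ∃ M : Matrix V V (ZMod 2), MagicGram edge le M ∧ M.rank = r} rmin) :
    ∃ kmin : ℕ, IsLeast {k : ℕ | 1 ≤ k ∧
        ∃ α : V → Matrix (Fin k → Fin 2) (Fin k → Fin 2) ℂ,
          IsPauliMagicAssignment k edge α} kmin ∧
      2 * kmin = rmin := by
  obtain ⟨⟨M, hM, hrank⟩, hle⟩ := hr
  obtain ⟨k, hk, hkM, hα⟩ := PauliMagic.exists_isPauliMagicAssignment heven hnd hmem hM
  refine ⟨k, ⟨⟨hk, hα⟩, ?_⟩, hkM.trans hrank⟩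
  rintro l ⟨-, β, hβ⟩
  obtain ⟨N, hN, hNl⟩ := PauliMagic.exists_magicGram_rank_le heven hnd hmem hβ
  have hmin : rmin ≤ N.rank := hle ⟨N, hN, rfl⟩
  omega

/-- For a proper Eulerian hypergraph whose valid Gram space contains a magic
Gram matrix, the minimum `k ≥ 1` admitting a `k`-qubit Pauli-based magic assignment is half of
the minimum rank over `ZMod 2` of the magic Gram matrices in the valid Gram space. -/
theorem stmt4 {V E : Type*} [Fintype V] [LinearOrder V] [Fintype E]
    (edge : E → Finset V) (hH : ProperEulerian edge)
    (le : List E) (hnd : le.Nodup) (hmem : ∀ e : E, e ∈ le)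
    (hmagic : ∃ M : Matrix V V (ZMod 2), MagicGram edge le M)
    (rmin : ℕ)
    (hr : IsLeast {r : ℕ | ∃ M : Matrix V V (ZMod 2), MagicGram edge le M ∧ M.rank = r} rmin) :
    ∃ kmin : ℕ, IsLeast {k : ℕ | 1 ≤ k ∧
        ∃ α : V → Matrix (Fin k → Fin 2) (Fin k → Fin 2) ℂ,
          IsPauliMagicAssignment k edge α} kmin ∧
      2 * kmin = rmin :=
  stmt4_general edge hH.1 le hnd hmem rmin hr
end
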